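/- arXiv:1405.3013 — 2 statements merged into one kernel-verified Lean document; each statement's English description precedes it below -/
import Mathlib

section
/- If Λ is a Delone set in ℝ^d with the Meyer property (i.e., Λ − Λ is uniformly discrete), then for every n ≥ 1 any n-fold combination Λ ± Λ ± ⋯ ± Λ (with any choice of signs) is uniformly discrete. -/
open Metric Set Pointwise

/-- A set of points in ℝ^d is uniformly discrete if some open ball radius `r > 0`
contains at most one of its points, wherever it is centered. -/
def UniformlyDiscrete {d : ℕ} (Λ : Set (EuclideanSpace ℝ (Fin d))) : Prop :=
  ∃ r > (0 : ℝ), ∀ c : EuclideanSpace ℝ (Fin d), (Λ ∩ Metric.ball c r).Subsingleton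

/-- A set of points in ℝ^d is relatively dense if some open ball radius `R > 0`
contains at least one of its points, wherever it is centered. -/
def RelativelyDense {d : ℕ} (Λ : Set (EuclideanSpace ℝ (Fin d))) : Prop :=
  ∃ R > (0 : ℝ), ∀ c : EuclideanSpace ℝ (Fin d), (Λ ∩ Metric.ball c R).Nonempty

/-- Delone set: uniformly discrete and relatively dense. -/
def Delone {d : ℕ} (Λ : Set (EuclideanSpace ℝ (Fin d))) : Prop :=
  UniformlyDiscrete Λ ∧ RelativelyDense Λ

namespace MeyerAux

variable {d : ℕ}

/-- `sumset F k` is the set of sums of `k` elements of `F`. -/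
def sumset (F : Set (EuclideanSpace ℝ (Fin d))) : ℕ → Set (EuclideanSpace ℝ (Fin d))
  | 0 => {0}
  | k + 1 => F + sumset F k

lemma sumset_finite {F : Set (EuclideanSpace ℝ (Fin d))} (hF : F.Finite) (k : ℕ) : (sumset F k).Finite := by
  induction k with
  | zero => exact Set.finite_singleton _
  | succ k ih => exact hF.add ih

lemma ud_count {S : Set (EuclideanSpace ℝ (Fin d))} (hS : UniformlyDiscrete S) (K : ℝ) :
    ∃ N : ℕ, ∀ x : EuclideanSpace ℝ (Fin d), (S ∩ ball x K).Finite ∧ (S ∩ ball x K).ncard ≤ N := by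
  obtain ⟨r, hr, h⟩ := hS
  obtain ⟨t, -, ht, hcov⟩ := Metric.finite_approx_of_totallyBounded
    (isCompact_closedBall (0 : EuclideanSpace ℝ (Fin d)) K).totallyBounded r hr
  refine ⟨t.ncard, fun x => ?_⟩
  have key : ∀ y : EuclideanSpace ℝ (Fin d), ∃ c : EuclideanSpace ℝ (Fin d), y ∈ S ∩ ball x K → c ∈ t ∧ y - x ∈ ball c r := by
    intro y
    by_cases hy : y ∈ S ∩ ball x K
    · have : y - x ∈ closedBall (0 : EuclideanSpace ℝ (Fin d)) K := by
        have := hy.2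
        rw [mem_ball, dist_eq_norm] at this
        rw [mem_closedBall, dist_zero_right]
        exact this.le
      have := hcov this
      simp only [mem_iUnion] at this
      obtain ⟨c, hc, h2⟩ := this
      exact ⟨c, fun _ => ⟨hc, h2⟩⟩
    · exact ⟨0, fun h => absurd h hy⟩
  choose f hf using key
  have hmaps : MapsTo f (S ∩ ball x K) t := fun y hy => (hf y hy).1
  have hinj : InjOn f (S ∩ ball x K) := by
    intro y hy z hz hyz
    have h1 := (hf y hy).2
    have h2 := (hf z hz).2
    rw [← hyz] at h2
    apply h (x + f y)
    · refine ⟨hy.1, ?_⟩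
      rw [mem_ball, dist_eq_norm] at h1 ⊢
      rwa [← sub_sub]
    · refine ⟨hz.1, ?_⟩
      rw [mem_ball, dist_eq_norm] at h2 ⊢
      rwa [← sub_sub]
  exact ⟨Set.Finite.of_injOn hmaps hinj ht, Set.ncard_le_ncard_of_injOn f hmaps hinj ht⟩

lemma walk_mem {V : Set (EuclideanSpace ℝ (Fin d))} {F : Set (EuclideanSpace ℝ (Fin d))} (G : SimpleGraph V)
    (hG : ∀ u v, G.Adj u v → (u : EuclideanSpace ℝ (Fin d)) - v ∈ F) {u v : V} (w : G.Walk u v) :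
    (u : EuclideanSpace ℝ (Fin d)) - v ∈ sumset F w.length := by
  induction w with
  | nil => simp [sumset]
  | cons h p ih =>
    rename_i a b c
    rw [SimpleGraph.Walk.length_cons]
    exact ⟨_, hG _ _ h, _, ih, by simp⟩

lemma reach {V : Set (EuclideanSpace ℝ (Fin d))} {F : Set (EuclideanSpace ℝ (Fin d))} (hFs : ∀ x ∈ F, -x ∈ F) (hV : V.Finite) (N : ℕ)
    (hN : V.ncard ≤ N)
    (f : EuclideanSpace ℝ (Fin d) → EuclideanSpace ℝ (Fin d)) (hf : ∀ z, f z ∈ V) (hstep : ∀ z z', ‖z - z'‖ ≤ 1 → f z - f z' ∈ F) (z : EuclideanSpace ℝ (Fin d)) :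
    f z - f 0 ∈ ⋃ k ∈ Iio N, sumset F k := by
  classical
  let G : SimpleGraph V := SimpleGraph.fromRel (fun u v => (u : EuclideanSpace ℝ (Fin d)) - v ∈ F)
  have hG : ∀ u v, G.Adj u v → (u : EuclideanSpace ℝ (Fin d)) - v ∈ F := by
    intro u v h
    rw [SimpleGraph.fromRel_adj] at h
    rcases h.2 with h | h
    · exact h
    · simpa using hFs _ h
  have hr : ∀ k : ℕ, ∀ z : EuclideanSpace ℝ (Fin d), ‖z‖ ≤ k → G.Reachable ⟨f z, hf z⟩ ⟨f 0, hf 0⟩ := by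
    intro k
    induction k with
    | zero =>
      intro z hz
      have : z = 0 := by simpa using hz
      subst this
      rfl
    | succ k ih =>
      intro z hz
      have hk : (0 : ℝ) < k + 1 := by positivity
      push_cast at hz
      have h1 : ‖((k : ℝ) / (k + 1)) • z‖ ≤ k := by
        rw [norm_smul, Real.norm_of_nonneg (by positivity), div_mul_eq_mul_div, div_le_iff₀ hk]
        gcongr
      have h2 : ‖z - ((k : ℝ) / (k + 1)) • z‖ ≤ 1 := by
        have : z - ((k : ℝ) / (k + 1)) • z = (1 / ((k : ℝ) + 1)) • z := by
          rw [show (1 / ((k : ℝ) + 1)) = 1 - (k : ℝ) / (k + 1) by field_simp; ring]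
          rw [sub_smul, one_smul]
        rw [this, norm_smul, Real.norm_of_nonneg (by positivity), div_mul_eq_mul_div,
          div_le_iff₀ hk]
        linarith
      refine SimpleGraph.Reachable.trans ?_ (ih _ h1)
      by_cases he : (⟨f z, hf z⟩ : V) = ⟨f (((k : ℝ) / (k + 1)) • z), hf _⟩
      · rw [he]
      · apply SimpleGraph.Adj.reachable
        rw [SimpleGraph.fromRel_adj]
        exact ⟨he, Or.inl (hstep _ _ h2)⟩
  obtain ⟨k, hk⟩ := exists_nat_ge ‖z‖
  obtain ⟨w⟩ := hr k z hk
  have : Fintype V := hV.fintype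
  have hlen := w.toPath.2.length_lt
  have hm := walk_mem G hG w.toPath.1
  simp only [mem_iUnion]
  refine ⟨_, ?_, hm⟩
  rw [mem_Iio]
  rw [← Nat.card_eq_fintype_card] at hlen
  exact lt_of_lt_of_le hlen hN

lemma diff_sub {Λ : Set (EuclideanSpace ℝ (Fin d))} (hR : RelativelyDense Λ) (hM : UniformlyDiscrete (Λ - Λ)) :
    ∃ F : Set (EuclideanSpace ℝ (Fin d)), F.Finite ∧ Λ - Λ ⊆ Λ + F := by
  obtain ⟨R, hR0, h⟩ := hR
  choose s hs using h
  have hsΛ : ∀ z, s z ∈ Λ := fun z => (hs z).1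
  have hsn : ∀ z, ‖s z - z‖ < R := fun z => by
    have := (hs z).2
    rwa [mem_ball, dist_eq_norm] at this
  obtain ⟨N, hN⟩ := ud_count hM (2 * R)
  obtain ⟨N', hN'⟩ := ud_count hM (2 * R + 2)
  have hDfin := (hN' 0).1
  set D := (Λ - Λ) ∩ ball (0 : EuclideanSpace ℝ (Fin d)) (2 * R + 2) with hD
  have hDmem : ∀ a ∈ Λ, ∀ b ∈ Λ, ‖a - b‖ < 2 * R + 2 → a - b ∈ D := fun a ha b hb hab =>
    ⟨sub_mem_sub ha hb, by rwa [mem_ball, dist_zero_right]⟩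
  have hF0 : (D - D).Finite := hDfin.sub hDfin
  have hF1 : (⋃ k ∈ Iio N, sumset (D - D) k).Finite :=
    (Set.finite_Iio N).biUnion (fun k _ => sumset_finite hF0 k)
  refine ⟨(⋃ k ∈ Iio N, sumset (D - D) k) + (D - D) + {-s 0},
    (hF1.add hF0).add (finite_singleton _), ?_⟩
  rintro _ ⟨a, ha, b, hb, rfl⟩
  have key := reach (V := (Λ - Λ) ∩ ball (a - b) (2 * R)) (F := D - D)
    (by
      rintro _ ⟨u, hu, v, hv, rfl⟩
      exact ⟨v, hv, u, hu, by simp⟩) (hN _).1 N (hN _).2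
    (fun z => s (a - b + z) - s z)
    (by
      intro z
      refine ⟨sub_mem_sub (hsΛ _) (hsΛ _), ?_⟩
      rw [mem_ball, dist_eq_norm]
      have h1 := hsn (a - b + z)
      have h2 := hsn z
      calc _ = ‖(s (a - b + z) - (a - b + z)) - (s z - z)‖ := by congr 1; abel
        _ ≤ _ := norm_sub_le _ _
        _ < _ := by linarith)
    (by
      intro z z' hz
      have step : ∀ u u' : EuclideanSpace ℝ (Fin d), ‖u - u'‖ ≤ 1 → s u - s u' ∈ D := by
        intro u u' hu
        apply hDmem _ (hsΛ _) _ (hsΛ _)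
        have h1 := hsn u
        have h2 := hsn u'
        calc ‖s u - s u'‖ = ‖((s u - u) - (s u' - u')) + (u - u')‖ := by congr 1; abel
          _ ≤ ‖(s u - u) - (s u' - u')‖ + ‖u - u'‖ := norm_add_le _ _
          _ ≤ ‖s u - u‖ + ‖s u' - u'‖ + ‖u - u'‖ := by gcongr; exact norm_sub_le _ _
          _ < _ := by linarith
      refine ⟨s (a - b + z) - s (a - b + z'), step _ _ (by simpa using hz), s z - s z',
        step _ _ hz, ?_⟩
      simp only
      abel) b
  have hnear : ∀ u ∈ Λ, u - s u ∈ D := fun u hu => by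
    apply hDmem _ hu _ (hsΛ _)
    rw [norm_sub_rev]
    linarith [hsn u]
  refine ⟨s (a - b), hsΛ _, _, add_mem_add (add_mem_add key
    (sub_mem_sub (hnear a ha) (hnear b hb))) rfl, ?_⟩
  simp only [add_zero, sub_add_cancel]
  abel

lemma comb_sub {Λ : Set (EuclideanSpace ℝ (Fin d))} (hR : RelativelyDense Λ) (hM : UniformlyDiscrete (Λ - Λ)) (n : ℕ) :
    ∀ ε : Fin n → ℤ, (∀ i, ε i = 1 ∨ ε i = -1) →
    ∃ G : Set (EuclideanSpace ℝ (Fin d)), G.Finite ∧ ∀ x : Fin n → EuclideanSpace ℝ (Fin d), (∀ i, x i ∈ Λ) → ∑ i, ε i • x i ∈ Λ + G := by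
  obtain ⟨F, hF, hsub⟩ := diff_sub hR hM
  obtain ⟨R, hR0, h⟩ := hR
  obtain ⟨p, hp, -⟩ := h 0
  induction n with
  | zero =>
    intro ε _
    exact ⟨{-p}, finite_singleton _, fun x _ => ⟨p, hp, -p, rfl, by simp⟩⟩
  | succ n ih =>
    intro ε hε
    obtain ⟨G, hG, hx⟩ := ih (fun i => ε i.succ) (fun i => hε _)
    rcases hε 0 with h0 | h0
    · refine ⟨F + {p} - F + G, ((hF.add (finite_singleton _)).sub hF).add hG, fun x hxΛ => ?_⟩
      obtain ⟨l, hl, g, hg, hlg⟩ := hx (fun i => x i.succ) (fun i => hxΛ _)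
      rw [Fin.sum_univ_succ, h0, one_smul]
      simp only at hlg
      rw [← hlg]
      obtain ⟨l', hl', f, hf, e⟩ := hsub (sub_mem_sub hp (hxΛ 0))
      obtain ⟨l'', hl'', f', hf', e'⟩ := hsub (sub_mem_sub hl hl')
      refine ⟨l'', hl'', _, add_mem_add (sub_mem_sub (add_mem_add hf' rfl) hf) hg, ?_⟩
      simp only at e e' ⊢
      have e1 : x 0 = p - (l' + f) := by rw [e]; abel
      have e2 : l = l'' + f' + l' := by rw [e']; abel
      rw [e1, e2]
      abel
    · refine ⟨F + G, hF.add hG, fun x hxΛ => ?_⟩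
      obtain ⟨l, hl, g, hg, hlg⟩ := hx (fun i => x i.succ) (fun i => hxΛ _)
      rw [Fin.sum_univ_succ, h0, neg_smul, one_smul]
      simp only at hlg
      rw [← hlg]
      obtain ⟨l', hl', f, hf, e⟩ := hsub (sub_mem_sub hl (hxΛ 0))
      refine ⟨l', hl', _, add_mem_add hf hg, ?_⟩
      simp only at e ⊢
      have e1 : l = l' + f + x 0 := by rw [e]; abel
      rw [e1]
      abel

lemma ud_of_sub {Λ G S : Set (EuclideanSpace ℝ (Fin d))} (hM : UniformlyDiscrete (Λ - Λ)) (hG : G.Finite)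
    (hS : S ⊆ Λ + G) : UniformlyDiscrete S := by
  obtain ⟨K, hK⟩ := (hG.sub hG).isBounded.exists_norm_le
  obtain ⟨N, hN⟩ := ud_count hM (1 + K + 1)
  have hfin : (((Λ - Λ) ∩ ball (0 : EuclideanSpace ℝ (Fin d)) (1 + K + 1)) + (G - G)).Finite :=
    (hN 0).1.add (hG.sub hG)
  set T := ((Λ - Λ) ∩ ball (0 : EuclideanSpace ℝ (Fin d)) (1 + K + 1)) + (G - G) with hT
  have hT' : (T \ {0}).Finite := hfin.subset sdiff_subset
  obtain ⟨r, hr, hball⟩ := Metric.isOpen_iff.1 hT'.isClosed.isOpen_compl (0 : EuclideanSpace ℝ (Fin d)) (by simp)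
  refine ⟨min (r / 2) (1 / 2), by positivity, ?_⟩
  rintro c x ⟨hx, hxc⟩ y ⟨hy, hyc⟩
  have hd : dist x y < min (r / 2) (1 / 2) + min (r / 2) (1 / 2) :=
    lt_of_le_of_lt (dist_triangle_right x y c) (add_lt_add hxc hyc)
  have h1 : ‖x - y‖ < r := by
    rw [← dist_eq_norm]; linarith [min_le_left (r / 2) (1 / 2 : ℝ)]
  have h2 : ‖x - y‖ < 1 := by
    rw [← dist_eq_norm]; linarith [min_le_right (r / 2) (1 / 2 : ℝ)]
  have h3 : x - y ∈ (T \ {0})ᶜ := hball (by rwa [mem_ball, dist_zero_right])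
  obtain ⟨l, hl, g, hg, e⟩ := hS hx
  obtain ⟨l', hl', g', hg', e'⟩ := hS hy
  simp only at e e'
  have hgg := hK _ (sub_mem_sub hg hg')
  have h4 : x - y ∈ T := by
    refine ⟨l - l', ⟨sub_mem_sub hl hl', ?_⟩, g - g', sub_mem_sub hg hg', ?_⟩
    · rw [mem_ball, dist_zero_right]
      calc ‖l - l'‖ = ‖(x - y) - (g - g')‖ := by rw [← e, ← e']; congr 1; abel
        _ ≤ _ := norm_sub_le _ _
        _ < _ := by linarith
    · simp only
      rw [← e, ← e']; abel
  by_contra hne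
  exact h3 ⟨h4, fun h => hne (sub_eq_zero.1 h)⟩

end MeyerAux

/-- if `Λ` is a Delone set with the Meyer property (`Λ - Λ` uniformly
discrete), then for every `n ≥ 1` and every choice of signs `ε` (starting with `+`),
the n-fold combination `Λ ± Λ ± ⋯ ± Λ` is uniformly discrete. -/
theorem stmt0 {d n : ℕ} (Λ : Set (EuclideanSpace ℝ (Fin d)))
    (hDelone : Delone Λ)
    (hMeyer : UniformlyDiscrete (Λ - Λ))
    (hn : 0 < n) (ε : Fin n → ℤ)
    (hε : ∀ i, ε i = 1 ∨ ε i = -1) (hε0 : ε ⟨0, hn⟩ = 1) :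
    UniformlyDiscrete
      {y : EuclideanSpace ℝ (Fin d) |
        ∃ x : Fin n → EuclideanSpace ℝ (Fin d), (∀ i, x i ∈ Λ) ∧ y = ∑ i, ε i • x i} := by
  obtain ⟨G, hG, h⟩ := MeyerAux.comb_sub hDelone.2 hMeyer n ε hε
  refine MeyerAux.ud_of_sub hMeyer hG ?_
  rintro _ ⟨x, hx, rfl⟩
  exact h x hx
end

section
/- A Delone set Λ in ℝ^d is a Meyer set (Λ − Λ uniformly discrete) if and only if there exists a finite set F ⊆ ℝ^d such that Λ − Λ ⊆ Λ + F. -/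
open Metric Set Pointwise

lemma UniformlyDiscrete.pack {d : ℕ} {D : Set (EuclideanSpace ℝ (Fin d))}
    (h : UniformlyDiscrete D) (K : ℝ) :
    ∃ N : ℕ, ∀ c, (D ∩ ball c K).Finite ∧ (D ∩ ball c K).ncard ≤ N := by
  obtain ⟨r, hr, h⟩ := h
  obtain ⟨t, -, htf, ht⟩ :=
    (isCompact_closedBall (0 : EuclideanSpace ℝ (Fin d)) K).finite_cover_balls hr
  refine ⟨t.ncard, fun c => ?_⟩
  have key : ∀ x : EuclideanSpace ℝ (Fin d), ∃ y, x ∈ D ∩ ball c K → y ∈ t ∧ x - c ∈ ball y r := by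
    intro x
    by_cases hx : x ∈ D ∩ ball c K
    · have : x - c ∈ closedBall (0 : EuclideanSpace ℝ (Fin d)) K := by
        have := hx.2
        rw [mem_ball, dist_eq_norm] at this
        simpa using this.le
      obtain ⟨y, hy, hxy⟩ := mem_iUnion₂.1 (ht this)
      exact ⟨y, fun _ => ⟨hy, hxy⟩⟩
    · exact ⟨0, fun h => absurd h hx⟩
  choose f hf using key
  have hmaps : MapsTo f (D ∩ ball c K) t := fun x hx => (hf x hx).1
  have hinj : InjOn f (D ∩ ball c K) := by
    intro x hx y hy hxy
    refine h (c + f x) ⟨hx.1, ?_⟩ ⟨hy.1, ?_⟩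
    · have := (hf x hx).2
      rw [mem_ball, dist_eq_norm] at this ⊢
      rwa [← sub_sub]
    · have := (hf y hy).2
      rw [← hxy] at this
      rw [mem_ball, dist_eq_norm] at this ⊢
      rwa [← sub_sub]
  exact ⟨Set.Finite.of_injOn hmaps hinj htf, Set.ncard_le_ncard_of_injOn f hmaps hinj htf⟩

/-- The `n`-fold sum of a set. -/
def iterSum {X : Type*} [AddCommGroup X] (E : Set X) : ℕ → Set X
  | 0 => {0}
  | n + 1 => iterSum E n + E

lemma iterSum_finite {X : Type*} [AddCommGroup X] {E : Set X} (hE : E.Finite) (n : ℕ) :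
    (iterSum E n).Finite := by
  induction n with
  | zero => exact Set.finite_singleton _
  | succ n ih => exact ih.add hE

lemma zero_mem_iterSum {X : Type*} [AddCommGroup X] {E : Set X} (hE : 0 ∈ E) (n : ℕ) :
    0 ∈ iterSum E n := by
  induction n with
  | zero => exact rfl
  | succ n ih => exact ⟨0, ih, 0, hE, by simp⟩

/-- Loop erasure. -/
lemma walk_mem {X : Type*} [AddCommGroup X] {E : Set X} (hE : 0 ∈ E) (N : ℕ) :
    ∀ (S : Set X), S.Finite → S.ncard ≤ N → ∀ (w : ℕ → X) (m : ℕ), (∀ i ≤ m, w i ∈ S) →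
      (∀ i < m, w (i + 1) - w i ∈ E) → w m - w 0 ∈ iterSum E N := by
  classical
  induction N with
  | zero =>
    intro S hS hc w m hw _
    have := (Set.ncard_eq_zero hS).1 (Nat.le_zero.1 hc)
    have h0 := hw 0 (Nat.zero_le _)
    simp [this] at h0
  | succ N ih =>
    intro S hS hc w m hw hs
    obtain ⟨i, hi⟩ : ∃ i, i = Nat.findGreatest (fun j => w j = w 0) m := ⟨_, rfl⟩
    have hi0 : w i = w 0 := by
      rw [hi]
      exact Nat.findGreatest_spec (P := fun j => w j = w 0) (Nat.zero_le m) rfl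
    have him : i ≤ m := hi ▸ Nat.findGreatest_le m
    have hgt : ∀ j, i < j → j ≤ m → w j ≠ w 0 := by
      intro j hj hjm
      rw [hi] at hj
      exact Nat.findGreatest_is_greatest hj hjm
    rcases him.eq_or_lt with h | h
    · rw [← h, hi0, sub_self]
      exact zero_mem_iterSum hE _
    · have hm := ih (S \ {w 0}) hS.sdiff (by
        have := Set.ncard_sdiff_singleton_add_one (hw 0 (Nat.zero_le _)) hS
        omega) (fun j => w (i + 1 + j)) (m - i - 1)
        (fun j hj => ⟨hw _ (by omega), hgt _ (by omega) (by omega)⟩)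
        (fun j hj => hs (i + 1 + j) (by omega))
      refine ⟨_, hm, _, hs i h, ?_⟩
      have e : i + 1 + (m - i - 1) = m := by omega
      simp only [e, hi0, add_zero]
      abel

lemma meyer_backward {d : ℕ} {Λ F : Set (EuclideanSpace ℝ (Fin d))}
    (hL : UniformlyDiscrete Λ) (hF : F.Finite) (h : Λ - Λ ⊆ Λ + F) :
    UniformlyDiscrete (Λ - Λ) := by
  obtain ⟨N, hN⟩ := hL.pack 1
  have hG : (F + F - F).Finite := (hF.add hF).sub hF
  have hP : ((Λ + (F + F - F)) ∩ ball 0 1).Finite := by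
    refine (hG.biUnion (t := fun g => (fun x => x + g) '' (Λ ∩ ball (-g) 1))
      (fun g _ => (hN (-g)).1.image _)).subset ?_
    rintro _ ⟨⟨x, hx, g, hg, rfl⟩, hb⟩
    refine mem_iUnion₂.2 ⟨g, hg, x, ⟨hx, ?_⟩, rfl⟩
    simpa [mem_ball, dist_eq_norm] using hb
  have hop : IsOpen ((((Λ + (F + F - F)) ∩ ball 0 1) \ {0})ᶜ) := hP.sdiff.isClosed.isOpen_compl
  obtain ⟨ε, hε, hb⟩ := Metric.isOpen_iff.1 hop 0 (by simp)
  refine ⟨min ε 1 / 2, by positivity, ?_⟩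
  rintro c x ⟨hx, hxc⟩ y ⟨hy, hyc⟩
  have hxy : ‖x - y‖ < min ε 1 := by
    rw [← dist_eq_norm]
    have := dist_triangle_right x y c
    rw [mem_ball] at hxc hyc
    linarith
  obtain ⟨u, hu, f, hf, rfl⟩ := h hx
  obtain ⟨u', hu', f', hf', rfl⟩ := h hy
  obtain ⟨u2, hu2, f2, hf2, e⟩ := h (Set.sub_mem_sub hu hu')
  have hmem : (u + f) - (u' + f') ∈ Λ + (F + F - F) := by
    refine ⟨u2, hu2, f2 + f - f', ⟨f2 + f, ⟨f2, hf2, f, hf, rfl⟩, f', hf', rfl⟩, ?_⟩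
    have e' : u2 + f2 = u - u' := e
    have : u2 = u - u' - f2 := by rw [← e']; abel
    simp only [this]
    abel
  by_contra hne
  refine hb (a := (u + f) - (u' + f')) ?_ ⟨⟨hmem, ?_⟩, ?_⟩
  · rw [mem_ball_zero_iff]; exact hxy.trans_le (min_le_left _ _)
  · rw [mem_ball_zero_iff]; exact hxy.trans_le (min_le_right _ _)
  · exact fun h0 => hne (sub_eq_zero.1 h0)

lemma meyer_forward {d : ℕ} {Λ : Set (EuclideanSpace ℝ (Fin d))}
    (hL : RelativelyDense Λ) (hD : UniformlyDiscrete (Λ - Λ)) :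
    ∃ F : Set (EuclideanSpace ℝ (Fin d)), F.Finite ∧ Λ - Λ ⊆ Λ + F := by
  classical
  obtain ⟨R, hR, hL⟩ := hL
  have key : ∀ c, ∃ y, (y ∈ Λ ∧ dist y c < R) ∧ (c ∈ Λ → y = c) := by
    intro c
    by_cases hc : c ∈ Λ
    · exact ⟨c, ⟨hc, by simpa using hR⟩, fun _ => rfl⟩
    · obtain ⟨y, hy, hyc⟩ := hL c
      exact ⟨y, ⟨hy, hyc⟩, fun h => absurd h hc⟩
  choose n hn hfix using key
  obtain ⟨N, hN⟩ := hD.pack (2 * R)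
  obtain ⟨N', hN'⟩ := hD.pack (2 * R + 1)
  obtain ⟨x0, hx0, -⟩ := hL 0
  set DT := (Λ - Λ) ∩ ball 0 (2 * R + 1) with hDT
  have hDTf : DT.Finite := (hN' 0).1
  have h0 : (0 : EuclideanSpace ℝ (Fin d)) ∈ DT - DT := by
    have : (0 : EuclideanSpace ℝ (Fin d)) ∈ DT :=
      ⟨⟨x0, hx0, x0, hx0, sub_self _⟩, mem_ball_self (by positivity)⟩
    exact ⟨0, this, 0, this, sub_self _⟩
  have hEf : (DT - DT).Finite := hDTf.sub hDTf
  have hstep : ∀ x y, ‖x - y‖ ≤ 1 → n x - n y ∈ DT := by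
    intro x y hxy
    refine ⟨⟨_, (hn x).1, _, (hn y).1, rfl⟩, ?_⟩
    rw [mem_ball_zero_iff, ← dist_eq_norm]
    rw [← dist_eq_norm] at hxy
    have h1 := dist_triangle4 (n x) x y (n y)
    have h2 := (hn x).2
    have h3 := (hn y).2
    rw [dist_comm] at h3
    linarith
  refine ⟨(fun z => -x0 - z) '' iterSum (DT - DT) N, (iterSum_finite hEf N).image _, ?_⟩
  rintro _ ⟨a, ha, b, hb, rfl⟩
  obtain ⟨m, hm⟩ := exists_nat_gt ‖x0 - b‖
  have hm0 : (0 : ℝ) < m := (norm_nonneg _).trans_lt hm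
  let v : ℕ → EuclideanSpace ℝ (Fin d) := fun i => ((i : ℝ) / m) • (x0 - b)
  have hv : ∀ i, ‖v (i + 1) - v i‖ ≤ 1 := by
    intro i
    have : v (i + 1) - v i = ((1 : ℝ) / m) • (x0 - b) := by
      simp only [v, ← sub_smul]
      congr 1
      push_cast
      ring
    rw [this, norm_smul, Real.norm_of_nonneg (by positivity), one_div, inv_mul_le_iff₀ hm0]
    linarith
  have hv0 : v 0 = 0 := by simp [v]
  have hvm : v m = x0 - b := by simp [v, div_self hm0.ne']
  have := walk_mem h0 N _ (hN (a - b)).1 (hN (a - b)).2 (fun i => n (a + v i) - n (b + v i)) m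
    (by
      intro i _
      refine ⟨⟨_, (hn _).1, _, (hn _).1, rfl⟩, ?_⟩
      rw [mem_ball, dist_eq_norm]
      have e : n (a + v i) - n (b + v i) - (a - b)
          = (n (a + v i) - (a + v i)) - (n (b + v i) - (b + v i)) := by abel
      have h2 := (hn (a + v i)).2
      have h3 := (hn (b + v i)).2
      rw [dist_eq_norm] at h2 h3
      rw [e]
      have := norm_sub_le (n (a + v i) - (a + v i)) (n (b + v i) - (b + v i))
      linarith)
    (by
      intro i _
      refine ⟨n (a + v (i + 1)) - n (a + v i), hstep _ _ (by simpa using hv i),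
        n (b + v (i + 1)) - n (b + v i), hstep _ _ (by simpa using hv i), ?_⟩
      simp only
      abel)
  simp only [hv0, hvm, add_zero, add_sub_cancel, hfix a ha, hfix b hb, hfix x0 hx0] at this
  refine ⟨n (a + (x0 - b)), (hn _).1, _, ⟨_, this, rfl⟩, ?_⟩
  simp only
  abel

/-- a Delone set `Λ` of ℝ^d is Meyer (`Λ - Λ` uniformly discrete)
iff there is a finite set `F` with `Λ - Λ ⊆ Λ + F`. -/
theorem stmt1 {d : ℕ} (Λ : Set (EuclideanSpace ℝ (Fin d))) (hDelone : Delone Λ) :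
    UniformlyDiscrete (Λ - Λ) ↔
      ∃ F : Set (EuclideanSpace ℝ (Fin d)), F.Finite ∧ Λ - Λ ⊆ Λ + F := by
  exact ⟨meyer_forward hDelone.2, fun ⟨_, hF, h⟩ => meyer_backward hDelone.1 hF h⟩
end
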